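/- Let ν ≥ −1/2. Then for all x > 0, x · K_{ν+2}(x) · I_ν(x) > 1/2. -/

import Mathlib

open Real MeasureTheory

/-- Modified Bessel function of the first kind, `I_ν(x) = ∑_{k} (x/2)^{ν+2k} / (Γ(ν+k+1) k!)`. -/
noncomputable def besselI (ν x : ℝ) : ℝ :=
  ∑' k : ℕ, (x / 2) ^ (ν + 2 * (k : ℝ)) / (Real.Gamma (ν + (k : ℝ) + 1) * (Nat.factorial k : ℝ))

/-- Modified Bessel function of the second kind, `K_ν(x) = ∫_0^∞ e^{-x cosh t} cosh(ν t) dt`. -/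
noncomputable def besselK (ν x : ℝ) : ℝ :=
  ∫ t in Set.Ioi (0 : ℝ), Real.exp (-x * Real.cosh t) * Real.cosh (ν * t)

/-- Lower incomplete gamma function `γ(a, x) = ∫_0^x t^{a-1} e^{-t} dt`. -/
noncomputable def lowerIncGamma (a x : ℝ) : ℝ :=
  ∫ t in (0 : ℝ)..x, t ^ (a - 1) * Real.exp (-t)

/-!
The Wronskian `x * (I_ν K_{ν+1} + I_{ν+1} K_ν)` has zero derivative and tends to `1` as `x → 0⁺`, so
it is identically `1`. For `ν ≥ -1/2` one has `I_{ν+1} < I_ν`, because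
`e^y y^{-ν} (I_ν(y) - I_{ν+1}(y))` is positive at `0⁺` and nondecreasing: its derivative is
`(2ν + 1) e^y y^{-ν-1} I_{ν+1}(y)`. Finally `K` increases with the absolute value of its
order, so `1 < 2 x I_ν K_μ` as soon as `μ ≥ ν + 1`.
-/

open Filter Topology

section RegularizedZeroFOne

lemma inv_Gamma_eq_mul_inv_Gamma_add_one (s : ℝ) : (Gamma s)⁻¹ = s * (Gamma (s + 1))⁻¹ := by
  rcases eq_or_ne s 0 with rfl | hs
  · simp
  · rw [Gamma_add_one hs, mul_inv, mul_inv_cancel_left₀ hs]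

/-- The regularized confluent hypergeometric limit function `₀F₁(; s; z) / Γ(s)`, an entire
function of `z`, through which the power series of `besselI` is differentiated termwise. At the
poles of `Γ` the junk values `Γ(-n) = 0` and `1 / 0 = 0` give the correct coefficient
`1 / Γ(-n) = 0`. It is the real counterpart of `Complex.regularizedHGFun 0 {s}`. -/
noncomputable def regularizedZeroFOne (s z : ℝ) : ℝ :=
  ∑' k : ℕ, z ^ k / (Gamma (s + k) * k.factorial)

variable (s z : ℝ)

lemma summable_regularizedZeroFOne :
    Summable fun k : ℕ ↦ z ^ k / (Gamma (s + k) * k.factorial) := by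
  refine (summable_pow_div_factorial |z|).of_norm_bounded_eventually_nat ?_
  filter_upwards [(tendsto_natCast_atTop_atTop (R := ℝ)).eventually_ge_atTop (2 - s)] with k hk
  have one_le_Gamma : 1 ≤ Gamma (s + k) := by
    have two_le : 2 ≤ s + k := by linarith
    simpa only [Gamma_two] using
      Gamma_strictMonoOn_Ici.monotoneOn Set.self_mem_Ici two_le two_le
  rw [norm_div, norm_pow, norm_eq_abs, norm_of_nonneg (by positivity)]
  gcongr
  exact le_mul_of_one_le_left (by positivity) one_le_Gamma

lemma hasSum_regularizedZeroFOne :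
    HasSum (fun k : ℕ ↦ z ^ k / (Gamma (s + k) * k.factorial)) (regularizedZeroFOne s z) :=
  (summable_regularizedZeroFOne s z).hasSum

lemma regularizedZeroFOne_zero_right : regularizedZeroFOne s 0 = (Gamma s)⁻¹ := by
  rw [regularizedZeroFOne, tsum_eq_single 0 fun k hk ↦ by simp [hk]]
  simp

variable {s z} in
lemma regularizedZeroFOne_pos (hs : 0 < s) (hz : 0 ≤ z) : 0 < regularizedZeroFOne s z := by
  have Gamma_pos (k : ℕ) : 0 < Gamma (s + k) := Gamma_pos_of_pos (by positivity)
  refine (summable_regularizedZeroFOne s z).tsum_pos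
    (fun k ↦ have := Gamma_pos k; by positivity) 0 ?_
  have := Gamma_pos 0
  positivity

lemma succ_mul_pow_div_Gamma_mul_factorial_succ (k : ℕ) :
    (k + 1 : ℕ) * z ^ k / (Gamma (s + (k + 1 : ℕ)) * (k + 1).factorial) =
      z ^ k / (Gamma (s + 1 + k) * k.factorial) := by
  have hk : ((k + 1 : ℕ) : ℝ) ≠ 0 := by positivity
  rw [Nat.factorial_succ, Nat.cast_mul, mul_left_comm, mul_div_mul_left _ _ hk]
  push_cast
  ring_nf

lemma hasDerivAt_regularizedZeroFOne :
    HasDerivAt (regularizedZeroFOne s) (regularizedZeroFOne (s + 1) z) z := by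
  have summable_derivatives (y : ℝ) :
      Summable fun k : ℕ ↦ k * y ^ (k - 1) / (Gamma (s + k) * k.factorial) := by
    rw [← summable_nat_add_iff 1]
    simpa only [Nat.add_sub_cancel, succ_mul_pow_div_Gamma_mul_factorial_succ] using
      summable_regularizedZeroFOne (s + 1) y
  have tsum_derivatives :
      ∑' k : ℕ, k * z ^ (k - 1) / (Gamma (s + k) * k.factorial) =
        regularizedZeroFOne (s + 1) z := by
    rw [(summable_derivatives z).tsum_eq_zero_add]
    simp only [Nat.add_sub_cancel, succ_mul_pow_div_Gamma_mul_factorial_succ, Nat.cast_zero,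
      zero_mul, zero_div, zero_add, regularizedZeroFOne]
  have mem_ball : z ∈ Metric.ball 0 (|z| + 1) := by simp
  rw [← tsum_derivatives]
  refine hasDerivAt_tsum_of_isPreconnected (summable_derivatives (|z| + 1)).norm
    Metric.isOpen_ball (convex_ball 0 _).isPreconnected
    (fun k y _ ↦ (hasDerivAt_pow k y).div_const _) (fun k y hy ↦ ?_) mem_ball
    (summable_regularizedZeroFOne s z) mem_ball
  simp only [norm_div, norm_mul, norm_pow]
  gcongr
  exact (mem_ball_zero_iff.mp hy).le.trans (le_abs_self _)

lemma continuous_regularizedZeroFOne : Continuous (regularizedZeroFOne s) :=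
  continuous_iff_continuousAt.mpr fun z ↦ (hasDerivAt_regularizedZeroFOne s z).continuousAt

lemma regularizedZeroFOne_eq_add :
    regularizedZeroFOne s z =
      s * regularizedZeroFOne (s + 1) z + z * regularizedZeroFOne (s + 2) z := by
  have hasSum_natCast_mul :
      HasSum (fun k : ℕ ↦ k * z ^ k / (Gamma (s + 1 + k) * k.factorial))
        (z * regularizedZeroFOne (s + 2) z) := by
    rw [← hasSum_nat_add_iff' 1]
    convert! (hasSum_regularizedZeroFOne (s + 2) z).mul_left z using 1
    · ext k
      rw [pow_succ', mul_left_comm, mul_div_assoc, succ_mul_pow_div_Gamma_mul_factorial_succ,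
        add_assoc s, one_add_one_eq_two]
    · simp
  refine (hasSum_regularizedZeroFOne s z).unique ?_
  convert! ((hasSum_regularizedZeroFOne (s + 1) z).mul_left s).add hasSum_natCast_mul using 1
  ext k
  have inv_Gamma : (Gamma (s + k))⁻¹ = (s + k) * (Gamma (s + 1 + k))⁻¹ := by
    rw [inv_Gamma_eq_mul_inv_Gamma_add_one, add_right_comm]
  rw [div_eq_mul_inv, mul_inv, inv_Gamma]
  ring

lemma hasDerivAt_regularizedZeroFOne_sq_div_four :
    HasDerivAt (fun y ↦ regularizedZeroFOne s (y ^ 2 / 4))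
      (z / 2 * regularizedZeroFOne (s + 1) (z ^ 2 / 4)) z := by
  have inner : HasDerivAt (fun y : ℝ ↦ y ^ 2 / 4) (z / 2) z := by
    convert! (hasDerivAt_pow 2 z).div_const 4 using 1
    simp
    ring
  rw [mul_comm]
  exact (hasDerivAt_regularizedZeroFOne s (z ^ 2 / 4)).comp z inner

variable {s z} in
lemma half_mul_regularizedZeroFOne_add_one_lt (hs : 1 / 2 ≤ s) (hz : 0 ≤ z) :
    z / 2 * regularizedZeroFOne (s + 1) (z ^ 2 / 4) < regularizedZeroFOne s (z ^ 2 / 4) := by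
  have hs_pos : 0 < s := by linarith
  let g (y : ℝ) : ℝ := exp y *
    (regularizedZeroFOne s (y ^ 2 / 4) - y / 2 * regularizedZeroFOne (s + 1) (y ^ 2 / 4))
  have hasDerivAt_g (y : ℝ) :
      HasDerivAt g (exp y * ((s - 1 / 2) * regularizedZeroFOne (s + 1) (y ^ 2 / 4))) y := by
    convert! (hasDerivAt_exp y).mul ((hasDerivAt_regularizedZeroFOne_sq_div_four s y).sub
      (((hasDerivAt_id y).div_const 2).mul
        (hasDerivAt_regularizedZeroFOne_sq_div_four (s + 1) y))) using 1
    simp only [id, Pi.sub_apply, Pi.mul_apply, regularizedZeroFOne_eq_add s,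
      add_assoc, one_add_one_eq_two]
    ring
  have g_mono : Monotone g := monotone_of_hasDerivAt_nonneg hasDerivAt_g fun y ↦ by
    have := regularizedZeroFOne_pos (s := s + 1) (z := y ^ 2 / 4) (by positivity) (by positivity)
    have : 0 ≤ s - 1 / 2 := by linarith
    simp only [Pi.zero_apply]
    positivity
  have g_zero_pos : 0 < g 0 := by
    simpa [g, regularizedZeroFOne_zero_right] using Gamma_pos_of_pos hs_pos
  have g_pos : 0 < g z := g_zero_pos.trans_le (g_mono hz)
  exact sub_pos.mp ((mul_pos_iff_of_pos_left (exp_pos z)).mp g_pos)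

end RegularizedZeroFOne

section BesselI

variable (ν : ℝ) {x : ℝ}

lemma besselI_eq_rpow_mul_regularizedZeroFOne (hx : 0 < x) :
    besselI ν x = (x / 2) ^ ν * regularizedZeroFOne (ν + 1) (x ^ 2 / 4) := by
  rw [besselI, regularizedZeroFOne, ← tsum_mul_left]
  refine tsum_congr fun k ↦ ?_
  have rpow_eq : (x / 2) ^ (ν + 2 * (k : ℝ)) = (x / 2) ^ ν * (x ^ 2 / 4) ^ k := by
    rw [rpow_add (by positivity), rpow_mul (by positivity), rpow_natCast, rpow_two]
    ring
  rw [rpow_eq, add_right_comm, mul_div_assoc]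

lemma besselI_eq_add (hx : 0 < x) :
    besselI ν x = 2 * (ν + 1) / x * besselI (ν + 1) x + besselI (ν + 2) x := by
  simp only [besselI_eq_rpow_mul_regularizedZeroFOne _ hx]
  rw [regularizedZeroFOne_eq_add (ν + 1), add_right_comm ν 2, rpow_add (by positivity),
    rpow_add (by positivity), rpow_one, rpow_two, add_assoc ν 1 1, one_add_one_eq_two]
  field_simp
  ring

lemma hasDerivAt_besselI (hx : 0 < x) :
    HasDerivAt (besselI ν) (besselI (ν + 1) x + ν / x * besselI ν x) x := by
  have eventuallyEq : besselI ν =ᶠ[𝓝 x]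
      fun y ↦ (y / 2) ^ ν * regularizedZeroFOne (ν + 1) (y ^ 2 / 4) := by
    filter_upwards [Ioi_mem_nhds hx] with y hy
    exact besselI_eq_rpow_mul_regularizedZeroFOne ν hy
  have hasDerivAt_rpow : HasDerivAt (fun y : ℝ ↦ (y / 2) ^ ν) (ν / x * (x / 2) ^ ν) x := by
    convert! ((hasDerivAt_id x).div_const 2).rpow_const (p := ν) (.inl (by positivity)) using 1
    rw [id, rpow_sub_one (by positivity)]
    field_simp
  refine HasDerivAt.congr_of_eventuallyEq ?_ eventuallyEq
  convert! hasDerivAt_rpow.mul (hasDerivAt_regularizedZeroFOne_sq_div_four (ν + 1) x) using 1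
  simp only [besselI_eq_rpow_mul_regularizedZeroFOne _ hx]
  rw [rpow_add_one (by positivity)]
  ring

lemma hasDerivAt_besselI_add_one (hx : 0 < x) :
    HasDerivAt (besselI (ν + 1)) (besselI ν x - (ν + 1) / x * besselI (ν + 1) x) x := by
  convert! hasDerivAt_besselI (ν + 1) hx using 1
  rw [besselI_eq_add ν hx, add_assoc ν, one_add_one_eq_two]
  ring

variable {ν}

lemma besselI_pos (hν : -1 < ν) (hx : 0 < x) : 0 < besselI ν x := by
  rw [besselI_eq_rpow_mul_regularizedZeroFOne ν hx]
  have := regularizedZeroFOne_pos (s := ν + 1) (z := x ^ 2 / 4) (by linarith) (by positivity)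
  positivity

lemma besselI_add_one_lt (hν : -(1 / 2) ≤ ν) (hx : 0 < x) : besselI (ν + 1) x < besselI ν x := by
  rw [besselI_eq_rpow_mul_regularizedZeroFOne _ hx, besselI_eq_rpow_mul_regularizedZeroFOne _ hx,
    rpow_add_one (by positivity), mul_assoc]
  gcongr
  exact half_mul_regularizedZeroFOne_add_one_lt (by linarith) hx.le

end BesselI

section BesselK

lemma sq_div_four_le_cosh (t : ℝ) : t ^ 2 / 4 ≤ cosh t := by
  rw [← cosh_abs, ← sq_abs, cosh_eq]
  linarith [quadratic_le_exp_of_nonneg (abs_nonneg t), abs_nonneg t, exp_pos (-|t|)]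

variable (s : ℝ) {x : ℝ}

lemma integrable_exp_mul_sub_mul_cosh (hx : 0 < x) :
    Integrable fun t ↦ exp (s * t - x * cosh t) := by
  have integrable_gaussian :
      Integrable fun t ↦ exp (s ^ 2 / x) * exp (-(x / 4) * (t - 2 * s / x) ^ 2) :=
    ((integrable_exp_neg_mul_sq (by positivity)).comp_sub_right (2 * s / x)).const_mul _
  refine integrable_gaussian.mono' (by fun_prop) (.of_forall fun t ↦ ?_)
  rw [norm_of_nonneg (exp_pos _).le, ← exp_add, exp_le_exp]
  calc s * t - x * cosh t
      ≤ s * t - x * (t ^ 2 / 4) := by gcongr; exact sq_div_four_le_cosh t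
    _ = s ^ 2 / x + -(x / 4) * (t - 2 * s / x) ^ 2 := by field_simp; ring

lemma exp_neg_mul_cosh_mul_cosh (x t : ℝ) :
    exp (-x * cosh t) * cosh (s * t) =
      (exp (s * t - x * cosh t) + exp (-s * t - x * cosh t)) / 2 := by
  rw [cosh_eq (s * t), sub_eq_neg_add, sub_eq_neg_add, exp_add, exp_add]
  ring_nf

lemma integrable_exp_neg_mul_cosh_mul_cosh (hx : 0 < x) :
    Integrable fun t ↦ exp (-x * cosh t) * cosh (s * t) := by
  simp only [exp_neg_mul_cosh_mul_cosh]
  exact ((integrable_exp_mul_sub_mul_cosh s hx).add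
    (integrable_exp_mul_sub_mul_cosh (-s) hx)).div_const 2

lemma besselK_eq_integral_exp (hx : 0 < x) :
    besselK s x = (∫ t, exp (s * t - x * cosh t)) / 2 := by
  have integral_neg_order :
      ∫ t, exp (-s * t - x * cosh t) = ∫ t, exp (s * t - x * cosh t) := by
    rw [← integral_neg_eq_self]
    simp only [neg_mul_neg, cosh_neg]
  have two_mul_besselK : 2 * besselK s x = ∫ t, exp (-x * cosh t) * cosh (s * t) := by
    rw [besselK, ← integral_comp_abs]
    simp only [cosh_abs, ← cosh_abs (s * |_|), abs_mul, abs_abs]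
    simp only [← abs_mul, cosh_abs]
  simp only [exp_neg_mul_cosh_mul_cosh] at two_mul_besselK
  rw [integral_div, integral_add (integrable_exp_mul_sub_mul_cosh s hx)
    (integrable_exp_mul_sub_mul_cosh (-s) hx), integral_neg_order] at two_mul_besselK
  linarith

lemma cosh_mul_exp_mul_sub_mul_cosh (x t : ℝ) :
    cosh t * exp (s * t - x * cosh t) =
      (exp ((s + 1) * t - x * cosh t) + exp ((s - 1) * t - x * cosh t)) / 2 := by
  rw [cosh_eq t, add_mul, sub_mul, one_mul, add_sub_right_comm, sub_right_comm, exp_add,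
    exp_sub _ t, exp_neg]
  ring

lemma sinh_mul_exp_mul_sub_mul_cosh (x t : ℝ) :
    sinh t * exp (s * t - x * cosh t) =
      (exp ((s + 1) * t - x * cosh t) - exp ((s - 1) * t - x * cosh t)) / 2 := by
  rw [sinh_eq t, add_mul, sub_mul, one_mul, add_sub_right_comm, sub_right_comm, exp_add,
    exp_sub _ t, exp_neg]
  ring

lemma hasDerivAt_besselK_half_sum (hx : 0 < x) :
    HasDerivAt (besselK s) (-(besselK (s + 1) x + besselK (s - 1) x) / 2) x := by
  have integrable_cosh_mul {y : ℝ} (hy : 0 < y) :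
      Integrable fun t ↦ cosh t * exp (s * t - y * cosh t) := by
    simp only [cosh_mul_exp_mul_sub_mul_cosh]
    exact ((integrable_exp_mul_sub_mul_cosh _ hy).add
      (integrable_exp_mul_sub_mul_cosh _ hy)).div_const 2
  have integral_cosh_mul :
      ∫ t, cosh t * exp (s * t - x * cosh t) = besselK (s + 1) x + besselK (s - 1) x := by
    simp only [cosh_mul_exp_mul_sub_mul_cosh]
    rw [integral_div, integral_add (integrable_exp_mul_sub_mul_cosh _ hx)
      (integrable_exp_mul_sub_mul_cosh _ hx), besselK_eq_integral_exp _ hx,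
      besselK_eq_integral_exp _ hx, add_div]
  have hasDerivAt_integral : HasDerivAt (fun y ↦ ∫ t, exp (s * t - y * cosh t))
      (∫ t, -(cosh t * exp (s * t - x * cosh t))) x := by
    refine (hasDerivAt_integral_of_dominated_loc_of_deriv_le
      (F' := fun y t ↦ -(cosh t * exp (s * t - y * cosh t)))
      (bound := fun t ↦ cosh t * exp (s * t - x / 2 * cosh t)) (Ioi_mem_nhds (half_lt_self hx))
      (.of_forall fun y ↦ by fun_prop) (integrable_exp_mul_sub_mul_cosh s hx)
      (integrable_cosh_mul hx).neg.aestronglyMeasurable (.of_forall fun t y hy ↦ ?_)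
      (integrable_cosh_mul (half_pos hx)) (.of_forall fun t y _ ↦ ?_)).2
    · have := cosh_pos t
      have : x / 2 ≤ y := (Set.mem_Ioi.mp hy).le
      rw [norm_neg, norm_of_nonneg (by positivity)]
      gcongr
    · convert! (((hasDerivAt_id y).mul_const (cosh t)).const_sub (s * t)).exp using 1
      simp only [id]
      ring
  have eventuallyEq : besselK s =ᶠ[𝓝 x] fun y ↦ (∫ t, exp (s * t - y * cosh t)) / 2 := by
    filter_upwards [Ioi_mem_nhds hx] with y hy
    exact besselK_eq_integral_exp s hy
  rw [← integral_cosh_mul, ← integral_neg]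
  exact (hasDerivAt_integral.div_const 2).congr_of_eventuallyEq eventuallyEq

lemma besselK_add_one (hx : 0 < x) :
    besselK (s + 1) x = besselK (s - 1) x + 2 * s / x * besselK s x := by
  have hasDerivAt_exp (t : ℝ) : HasDerivAt (fun t ↦ exp (s * t - x * cosh t))
      (s * exp (s * t - x * cosh t) - x * ((exp ((s + 1) * t - x * cosh t) -
        exp ((s - 1) * t - x * cosh t)) / 2)) t := by
    rw [← sinh_mul_exp_mul_sub_mul_cosh]
    convert! (((hasDerivAt_id t).const_mul s).sub ((hasDerivAt_cosh t).const_mul x)).exp using 1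
    simp only [Pi.sub_apply, id]
    ring
  have integrable_order (r : ℝ) := integrable_exp_mul_sub_mul_cosh r hx
  have integrable_sub := ((integrable_order (s + 1)).sub (integrable_order (s - 1))).div_const 2
  have integral_deriv := integral_eq_zero_of_hasDerivAt_of_integrable hasDerivAt_exp
    (((integrable_order s).const_mul s).sub (integrable_sub.const_mul x)) (integrable_order s)
  simp only [Pi.sub_apply] at integrable_sub
  rw [integral_sub ((integrable_order s).const_mul s) (integrable_sub.const_mul x),
    integral_const_mul, integral_const_mul, integral_div,
    integral_sub (integrable_order _) (integrable_order _)] at integral_deriv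
  simp only [besselK_eq_integral_exp _ hx]
  field_simp
  linarith

lemma hasDerivAt_besselK (hx : 0 < x) :
    HasDerivAt (besselK s) (s / x * besselK s x - besselK (s + 1) x) x := by
  convert! hasDerivAt_besselK_half_sum s hx using 1
  rw [besselK_add_one s hx]
  ring

lemma hasDerivAt_besselK_add_one (hx : 0 < x) :
    HasDerivAt (besselK (s + 1)) (-((s + 1) / x * besselK (s + 1) x) - besselK s x) x := by
  convert! hasDerivAt_besselK_half_sum (s + 1) hx using 1
  rw [besselK_add_one (s + 1) hx, add_sub_cancel_right]
  ring

lemma besselK_pos (hx : 0 < x) : 0 < besselK s x := by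
  rw [besselK_eq_integral_exp s hx]
  exact half_pos (integral_exp_pos (integrable_exp_mul_sub_mul_cosh s hx))

variable {s} in
lemma besselK_le_besselK {r : ℝ} (hx : 0 < x) (h : |r| ≤ |s|) : besselK r x ≤ besselK s x := by
  refine setIntegral_mono (integrable_exp_neg_mul_cosh_mul_cosh r hx).integrableOn
    (integrable_exp_neg_mul_cosh_mul_cosh s hx).integrableOn fun t ↦ ?_
  have cosh_le : cosh (r * t) ≤ cosh (s * t) := by
    rw [cosh_le_cosh, abs_mul, abs_mul]
    gcongr
  gcongr

-- The substitution `u = (x / 2) * e ^ t` makes the limit `x → 0⁺` a dominated one.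
lemma rpow_mul_besselK_eq_integral (hx : 0 < x) :
    x ^ s * besselK s x =
      2 ^ (s - 1) * ∫ u in Set.Ioi 0, exp (-u - x ^ 2 / (4 * u)) * u ^ (s - 1) := by
  have hx2 : 0 < x / 2 := half_pos hx
  have image_eq : (fun t ↦ x / 2 * exp t) '' Set.univ = Set.Ioi 0 := by
    rw [Set.image_univ, ← Function.comp_def (x / 2 * ·) exp, Set.range_comp, range_exp,
      Set.image_mul_left_Ioi hx2, mul_zero]
  have injective : Function.Injective fun t ↦ x / 2 * exp t :=
    (mul_right_injective₀ hx2.ne').comp exp_injective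
  have integrand_eq (t : ℝ) :
      |x / 2 * exp t| * (exp (-(x / 2 * exp t) - x ^ 2 / (4 * (x / 2 * exp t))) *
        (x / 2 * exp t) ^ (s - 1)) = (x / 2) ^ s * exp (s * t - x * cosh t) := by
    have exponent_eq :
        -(x / 2 * exp t) - x ^ 2 / (4 * (x / 2 * exp t)) = -(x * cosh t) := by
      rw [cosh_eq, exp_neg]
      field_simp
      ring
    rw [exponent_eq, abs_of_pos (by positivity), rpow_sub_one (by positivity),
      mul_rpow hx2.le (exp_pos t).le, ← exp_mul, sub_eq_add_neg, exp_add, mul_comm t s]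
    field_simp
  rw [← image_eq, integral_image_eq_integral_abs_deriv_smul MeasurableSet.univ
    (fun t _ ↦ ((hasDerivAt_exp t).const_mul (x / 2)).hasDerivWithinAt) injective.injOn]
  simp only [smul_eq_mul, integrand_eq]
  rw [setIntegral_univ, integral_const_mul, besselK_eq_integral_exp s hx,
    div_rpow hx.le zero_le_two, rpow_sub_one two_ne_zero]
  field_simp

variable {s} in
lemma tendsto_rpow_mul_besselK_nhdsGT_zero (hs : 0 < s) :
    Tendsto (fun x ↦ x ^ s * besselK s x) (𝓝[>] 0) (𝓝 (2 ^ (s - 1) * Gamma s)) := by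
  have tendsto_integral : Tendsto
      (fun x : ℝ ↦ ∫ u in Set.Ioi 0, exp (-u - x ^ 2 / (4 * u)) * u ^ (s - 1)) (𝓝 0)
      (𝓝 (∫ u in Set.Ioi 0, exp (-u) * u ^ (s - 1))) := by
    refine tendsto_integral_filter_of_dominated_convergence (fun u ↦ exp (-u) * u ^ (s - 1))
      (.of_forall fun x ↦ by fun_prop) (.of_forall fun x ↦ ?_) (GammaIntegral_convergent hs)
      (.of_forall fun u ↦ ?_)
    · filter_upwards [ae_restrict_mem measurableSet_Ioi] with u (hu : 0 < u)
      rw [norm_of_nonneg (by positivity)]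
      gcongr
      exact sub_le_self _ (by positivity)
    · have : Continuous fun x : ℝ ↦ exp (-u - x ^ 2 / (4 * u)) * u ^ (s - 1) := by fun_prop
      simpa using this.tendsto 0
  rw [Gamma_eq_integral hs]
  refine ((tendsto_integral.mono_left nhdsWithin_le_nhds).const_mul _).congr' ?_
  filter_upwards [self_mem_nhdsWithin] with x hx
  exact (rpow_mul_besselK_eq_integral s hx).symm

-- The recurrence reduces `K_s` to the positive orders `s + 1` and `s + 2`, whose limits cancel.
variable {s} in
lemma tendsto_rpow_add_two_mul_besselK_nhdsGT_zero (hs : -1 < s) :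
    Tendsto (fun x ↦ x ^ (s + 2) * besselK s x) (𝓝[>] 0) (𝓝 0) := by
  have limits_cancel :
      (2 : ℝ) ^ (s + 2 - 1) * Gamma (s + 2) - 2 * (s + 1) * (2 ^ (s + 1 - 1) * Gamma (s + 1)) =
        0 := by
    rw [← one_add_one_eq_two, ← add_assoc, Gamma_add_one (by linarith), add_sub_cancel_right,
      add_sub_cancel_right, one_add_one_eq_two, rpow_add_one two_ne_zero]
    ring
  have tendsto_sub := (tendsto_rpow_mul_besselK_nhdsGT_zero (s := s + 2) (by linarith)).sub
    ((tendsto_rpow_mul_besselK_nhdsGT_zero (s := s + 1) (by linarith)).const_mul (2 * (s + 1)))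
  rw [limits_cancel] at tendsto_sub
  refine tendsto_sub.congr' ?_
  filter_upwards [self_mem_nhdsWithin] with x (hx : 0 < x)
  have recurrence := besselK_add_one (s + 1) hx
  rw [add_sub_cancel_right, add_assoc, one_add_one_eq_two] at recurrence
  rw [recurrence, ← one_add_one_eq_two, ← add_assoc, rpow_add_one hx.ne']
  field_simp
  ring

end BesselK

section Wronskian

variable {ν x : ℝ}

variable (ν) in
lemma hasDerivAt_mul_besselI_besselK_wronskian (hx : 0 < x) :
    HasDerivAt (fun y ↦ y * (besselI ν y * besselK (ν + 1) y + besselI (ν + 1) y * besselK ν y))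
      0 x := by
  convert! (hasDerivAt_id x).mul
    (((hasDerivAt_besselI ν hx).mul (hasDerivAt_besselK_add_one ν hx)).add
      ((hasDerivAt_besselI_add_one ν hx).mul (hasDerivAt_besselK ν hx))) using 1
  simp only [Pi.add_apply, Pi.mul_apply, id]
  field_simp
  ring

lemma tendsto_mul_besselI_mul_nhdsGT_zero {f : ℝ → ℝ} {L : ℝ}
    (hf : Tendsto (fun x ↦ x ^ (ν + 1) * f x) (𝓝[>] 0) (𝓝 L)) :
    Tendsto (fun x ↦ x * (besselI ν x * f x)) (𝓝[>] 0) (𝓝 (L / (2 ^ ν * Gamma (ν + 1)))) := by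
  have tendsto_series : Tendsto (fun x : ℝ ↦ regularizedZeroFOne (ν + 1) (x ^ 2 / 4)) (𝓝[>] 0)
      (𝓝 (Gamma (ν + 1))⁻¹) := by
    rw [← regularizedZeroFOne_zero_right]
    have : Continuous fun x : ℝ ↦ regularizedZeroFOne (ν + 1) (x ^ 2 / 4) :=
      (continuous_regularizedZeroFOne _).comp (by fun_prop)
    simpa using (this.tendsto 0).mono_left nhdsWithin_le_nhds
  rw [mul_comm, ← div_div, div_eq_mul_inv L]
  refine ((hf.mul tendsto_series).div_const (2 ^ ν)).congr' ?_
  filter_upwards [self_mem_nhdsWithin] with x (hx : 0 < x)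
  rw [besselI_eq_rpow_mul_regularizedZeroFOne ν hx, div_rpow hx.le zero_le_two,
    rpow_add_one hx.ne']
  ring

lemma tendsto_mul_besselI_besselK_wronskian_nhdsGT_zero (hν : -1 < ν) :
    Tendsto (fun x ↦ x * (besselI ν x * besselK (ν + 1) x + besselI (ν + 1) x * besselK ν x))
      (𝓝[>] 0) (𝓝 1) := by
  have tendsto_first :
      Tendsto (fun x ↦ x * (besselI ν x * besselK (ν + 1) x)) (𝓝[>] 0) (𝓝 1) := by
    have hΓ := (Gamma_pos_of_pos (by linarith : 0 < ν + 1)).ne'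
    convert tendsto_mul_besselI_mul_nhdsGT_zero
      (tendsto_rpow_mul_besselK_nhdsGT_zero (by linarith : 0 < ν + 1)) using 2
    rw [add_sub_cancel_right, div_self (by positivity)]
  have tendsto_second :
      Tendsto (fun x ↦ x * (besselI (ν + 1) x * besselK ν x)) (𝓝[>] 0) (𝓝 0) := by
    have tendsto_rpow_mul := tendsto_rpow_add_two_mul_besselK_nhdsGT_zero hν
    rw [← one_add_one_eq_two, ← add_assoc] at tendsto_rpow_mul
    simpa only [zero_div] using tendsto_mul_besselI_mul_nhdsGT_zero tendsto_rpow_mul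
  simpa only [mul_add, add_zero] using tendsto_first.add tendsto_second

theorem mul_besselI_besselK_wronskian_eq_one (hν : -1 < ν) (hx : 0 < x) :
    x * (besselI ν x * besselK (ν + 1) x + besselI (ν + 1) x * besselK ν x) = 1 := by
  have hasDerivAt_zero {y : ℝ} (hy : 0 < y) := hasDerivAt_mul_besselI_besselK_wronskian ν hy
  refine tendsto_nhds_unique (tendsto_const_nhds.congr' ?_)
    (tendsto_mul_besselI_besselK_wronskian_nhdsGT_zero hν)
  filter_upwards [self_mem_nhdsWithin] with y hy
  exact isOpen_Ioi.is_const_of_deriv_eq_zero isPreconnected_Ioi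
    (fun z hz ↦ (hasDerivAt_zero hz).differentiableAt.differentiableWithinAt)
    (fun z hz ↦ (hasDerivAt_zero hz).deriv) hx hy

end Wronskian

theorem stmt_8_general {ν μ x : ℝ} (hν : -(1 / 2) ≤ ν) (hμ : ν + 1 ≤ μ) (hx : 0 < x) :
    1 / 2 < x * besselK μ x * besselI ν x := by
  have abs_μ : |μ| = μ := abs_of_nonneg (by linarith)
  have K_add_one_le : besselK (ν + 1) x ≤ besselK μ x :=
    besselK_le_besselK hx (by rw [abs_μ, abs_le]; constructor <;> linarith)
  have K_le : besselK ν x ≤ besselK μ x :=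
    besselK_le_besselK hx (by rw [abs_μ, abs_le]; constructor <;> linarith)
  have K_pos : 0 < besselK μ x := besselK_pos μ hx
  have I_pos : 0 < besselI ν x := besselI_pos (by linarith) hx
  have one_lt : 1 < 2 * (x * besselK μ x * besselI ν x) := calc
    1 = x * (besselI ν x * besselK (ν + 1) x + besselI (ν + 1) x * besselK ν x) :=
      (mul_besselI_besselK_wronskian_eq_one (by linarith) hx).symm
    _ ≤ x * (besselI ν x * besselK μ x + besselI (ν + 1) x * besselK μ x) := by
      have := besselI_pos (by linarith : -1 < ν + 1) hx
      gcongr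
    _ < x * (besselI ν x * besselK μ x + besselI ν x * besselK μ x) := by
      gcongr
      exact besselI_add_one_lt hν hx
    _ = 2 * (x * besselK μ x * besselI ν x) := by ring
  linarith

theorem stmt_8 (ν : ℝ) (hν : -(1/2) ≤ ν) (x : ℝ) (hx : 0 < x) :
    x * besselK (ν + 2) x * besselI ν x > 1/2 :=
  stmt_8_general hν (by linarith) hx
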